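/- For every 0 ≤ q ≤ d, the natural P-equivariant map ind_{P_0Z}^P(V_q) → ⊕_{η∈BT_q} V_η is an isomorphism of smooth P-representations, where V_q := ⊕_{J⊆{1,…,d}, |J|=q} ⊕_{n_0 ∈ N_0/∩_{j∈J}φ_jN_0φ_j⁻¹} V_{n_0·η_J} is a P_0Z-subrepresentation of ⊕_{η∈BT_q} V_η on which Z acts trivially. -/

import Mathlib

set_option synthInstance.maxHeartbeats 1000000

noncomputable section

open scoped Classical Pointwise DirectSum

variable (p : ℕ) [Fact (Nat.Prime p)] (d : ℕ)

/-- The vector space `ℚ_p^{d+1}`. -/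
abbrev Vsp := Fin (d + 1) → ℚ_[p]

/-- The general linear group `GL_{d+1}(ℚ_p)`. -/
abbrev GL' := (Matrix (Fin (d + 1)) (Fin (d + 1)) ℚ_[p])ˣ

/-- A `ℤ_p`-lattice in `ℚ_p^{d+1}`: a finitely generated `ℤ_p`-submodule which spans
`ℚ_p^{d+1}` over `ℚ_p`. -/
def IsLattice (L : Submodule ℤ_[p] (Vsp p d)) : Prop :=
  L.FG ∧ Submodule.span ℚ_[p] (L : Set (Vsp p d)) = ⊤

/-- The type of lattices. -/
def LatZ := {L : Submodule ℤ_[p] (Vsp p d) // IsLattice p d L}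

/-- Scalar multiplication by `c ∈ ℚ_p` as a `ℤ_p`-linear endomorphism of `ℚ_p^{d+1}`. -/
def scalarMap (c : ℚ_[p]) : Vsp p d →ₗ[ℤ_[p]] Vsp p d where
  toFun v := c • v
  map_add' := smul_add c
  map_smul' a v := (smul_comm a c v).symm

lemma scalarMap_one : scalarMap p d 1 = LinearMap.id := by
  ext v
  simp [scalarMap]

lemma scalarMap_comp (c c' : ℚ_[p]) :
    (scalarMap p d c).comp (scalarMap p d c') = scalarMap p d (c * c') := by
  ext v
  simp [scalarMap, mul_smul]

/-- Homothety equivalence of lattices. -/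
def latSetoid : Setoid (LatZ p d) where
  r L L' := ∃ c : ℚ_[p]ˣ, Submodule.map (scalarMap p d (c : ℚ_[p])) L.1 = L'.1
  iseqv := by
    constructor
    · intro L
      exact ⟨1, by rw [Units.val_one, scalarMap_one, Submodule.map_id]⟩
    · rintro L L' ⟨c, hc⟩
      refine ⟨c⁻¹, ?_⟩
      rw [← hc, ← Submodule.map_comp, scalarMap_comp,
        show ((c⁻¹ : ℚ_[p]ˣ) : ℚ_[p]) * (c : ℚ_[p]) = 1 by
          rw [← Units.val_mul, inv_mul_cancel, Units.val_one],
        scalarMap_one, Submodule.map_id]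
    · rintro L L' L'' ⟨c, hc⟩ ⟨c', hc'⟩
      refine ⟨c' * c, ?_⟩
      rw [← hc', ← hc, ← Submodule.map_comp, scalarMap_comp, ← Units.val_mul]

/-- The set of vertices of the Bruhat–Tits building: homothety classes of lattices. -/
def Vtx := Quotient (latSetoid p d)

/-- The action of `g ∈ GL_{d+1}(ℚ_p)` on `ℚ_p^{d+1}`, as a `ℤ_p`-linear map. -/
def glMap (g : GL' p d) : Vsp p d →ₗ[ℤ_[p]] Vsp p d where
  toFun v := (g : Matrix (Fin (d + 1)) (Fin (d + 1)) ℚ_[p]).mulVec v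
  map_add' v w := Matrix.mulVec_add _ v w
  map_smul' a v := by
    have h1 : a • v = (a : ℚ_[p]) • v := (algebraMap_smul ℚ_[p] a v).symm
    have h2 : a • (g : Matrix (Fin (d + 1)) (Fin (d + 1)) ℚ_[p]).mulVec v
        = (a : ℚ_[p]) • (g : Matrix (Fin (d + 1)) (Fin (d + 1)) ℚ_[p]).mulVec v :=
      (algebraMap_smul ℚ_[p] a _).symm
    simp only [RingHom.id_apply, h1, h2, Matrix.mulVec_smul]

lemma glMap_surjective (g : GL' p d) : Function.Surjective (glMap p d g) := by
  intro w
  refine ⟨(g⁻¹ : GL' p d).val.mulVec w, ?_⟩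
  show (g : Matrix (Fin (d + 1)) (Fin (d + 1)) ℚ_[p]).mulVec
      ((g⁻¹ : GL' p d).val.mulVec w) = w
  rw [Matrix.mulVec_mulVec, Units.mul_inv, Matrix.one_mulVec]

lemma IsLattice.map {L : Submodule ℤ_[p] (Vsp p d)} (hL : IsLattice p d L) (g : GL' p d) :
    IsLattice p d (Submodule.map (glMap p d g) L) := by
  constructor
  · exact hL.1.map _
  · have h1 : (Submodule.map (glMap p d g) L : Set (Vsp p d)) = glMap p d g '' L :=
      Submodule.map_coe _ _
    have h2 : ⇑(glMap p d g) = ⇑(Matrix.mulVecLin (g : Matrix _ _ _)) := rfl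
    rw [h1, h2, Submodule.span_image, hL.2, Submodule.map_top, LinearMap.range_eq_top]
    exact glMap_surjective p d g

lemma glMap_scalar_comm (g : GL' p d) (c : ℚ_[p]) :
    (glMap p d g).comp (scalarMap p d c) = (scalarMap p d c).comp (glMap p d g) := by
  refine LinearMap.ext fun v => ?_
  show (g : Matrix (Fin (d + 1)) (Fin (d + 1)) ℚ_[p]).mulVec (c • v)
      = c • (g : Matrix (Fin (d + 1)) (Fin (d + 1)) ℚ_[p]).mulVec v
  rw [Matrix.mulVec_smul]

/-- The action of `GL_{d+1}(ℚ_p)` on lattices. -/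
def latAct (g : GL' p d) (L : LatZ p d) : LatZ p d :=
  ⟨Submodule.map (glMap p d g) L.1, IsLattice.map p d L.2 g⟩

/-- The action of `GL_{d+1}(ℚ_p)` on the vertices of the Bruhat–Tits building. -/
def vAct (g : GL' p d) : Vtx p d → Vtx p d :=
  Quotient.map (latAct p d g) (by
    rintro L L' ⟨c, hc⟩
    refine ⟨c, ?_⟩
    show Submodule.map (scalarMap p d (c : ℚ_[p])) (Submodule.map (glMap p d g) L.1)
        = Submodule.map (glMap p d g) L'.1
    rw [← Submodule.map_comp, ← glMap_scalar_comm, Submodule.map_comp, hc])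

/-- The standard lattice `ℤ_p^{d+1} ⊆ ℚ_p^{d+1}`. -/
def L0 : Submodule ℤ_[p] (Vsp p d) :=
  Submodule.span ℤ_[p] (Set.range fun i : Fin (d + 1) => Pi.single i (1 : ℚ_[p]))

lemma isLattice_L0 : IsLattice p d (L0 p d) := by
  constructor
  · exact Submodule.fg_span (Set.finite_range _)
  · have hb : Submodule.span ℚ_[p]
        (Set.range fun i : Fin (d + 1) => Pi.single i (1 : ℚ_[p])) = ⊤ := by
      have hsp := Module.Basis.span_eq (Pi.basisFun ℚ_[p] (Fin (d + 1)))
      have hr : ⇑(Pi.basisFun ℚ_[p] (Fin (d + 1)))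
          = fun i : Fin (d + 1) => Pi.single i (1 : ℚ_[p]) := by
        funext i
        exact Pi.basisFun_apply ℚ_[p] (Fin (d + 1)) i
      rwa [hr] at hsp
    refine le_antisymm le_top ?_
    rw [← hb]
    exact Submodule.span_mono (fun x hx => Submodule.subset_span hx)

/-- The origin `x_0 = [ℤ_p^{d+1}]` of the Bruhat–Tits building. -/
def x0 : Vtx p d := Quotient.mk _ ⟨L0 p d, isLattice_L0 p d⟩

/-- The diagonal element `φ_k = diag(1, …, 1, p, …, p)` with `k` entries equal to `1`. -/
def phiDiag (k : ℕ) : GL' p d where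
  val := Matrix.diagonal fun j : Fin (d + 1) => if (j : ℕ) < k then 1 else (p : ℚ_[p])
  inv := Matrix.diagonal fun j : Fin (d + 1) => if (j : ℕ) < k then 1 else (p : ℚ_[p])⁻¹
  val_inv := by
    have hp : (p : ℚ_[p]) ≠ 0 :=
      Nat.cast_ne_zero.mpr (Fact.out (p := Nat.Prime p)).ne_zero
    rw [Matrix.diagonal_mul_diagonal]
    have h1 : (fun j : Fin (d + 1) =>
        (if (j : ℕ) < k then 1 else (p : ℚ_[p])) * (if (j : ℕ) < k then 1 else (p : ℚ_[p])⁻¹))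
        = fun _ => 1 := by
      funext j
      by_cases h : (j : ℕ) < k <;> simp [h, mul_inv_cancel₀ hp]
    rw [h1, Matrix.diagonal_one]
  inv_val := by
    have hp : (p : ℚ_[p]) ≠ 0 :=
      Nat.cast_ne_zero.mpr (Fact.out (p := Nat.Prime p)).ne_zero
    rw [Matrix.diagonal_mul_diagonal]
    have h1 : (fun j : Fin (d + 1) =>
        (if (j : ℕ) < k then 1 else (p : ℚ_[p])⁻¹) * (if (j : ℕ) < k then 1 else (p : ℚ_[p])))
        = fun _ => 1 := by
      funext j
      by_cases h : (j : ℕ) < k <;> simp [h, inv_mul_cancel₀ hp]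
    rw [h1, Matrix.diagonal_one]

/-- The vertex `x_i := φ_i · x_0` for `1 ≤ i ≤ d`. -/
def xVtx (i : Fin d) : Vtx p d := vAct p d (phiDiag p d ((i : ℕ) + 1)) (x0 p d)

/-- The `q`-simplex `η_J = {x_0, x_{j_1}, …, x_{j_q}}` for `J ⊆ {1, …, d}`. -/
def etaJ (J : Finset (Fin d)) : Finset (Vtx p d) :=
  insert (x0 p d) (J.image (xVtx p d))

/-- The Borel subgroup `P` of lower triangular matrices in `GL_{d+1}(ℚ_p)`, as a set. -/
def Pset : Set (GL' p d) :=
  {g | ∀ i j : Fin (d + 1), i < j → (g : Matrix (Fin (d + 1)) (Fin (d + 1)) ℚ_[p]) i j = 0}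

/-- The unipotent radical `N` of `P`: lower unitriangular matrices, as a set. -/
def Nset : Set (GL' p d) :=
  {g | (∀ i : Fin (d + 1), (g : Matrix (Fin (d + 1)) (Fin (d + 1)) ℚ_[p]) i i = 1) ∧
    ∀ i j : Fin (d + 1), i < j → (g : Matrix (Fin (d + 1)) (Fin (d + 1)) ℚ_[p]) i j = 0}

/-- The diagonal torus `T`, as a set. -/
def Tset : Set (GL' p d) :=
  {t | ∀ i j : Fin (d + 1), i ≠ j → (t : Matrix (Fin (d + 1)) (Fin (d + 1)) ℚ_[p]) i j = 0}

/-- The compact group `N_0` of lower unitriangular matrices with entries in `ℤ_p`,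
as a set. -/
def N₀set : Set (GL' p d) :=
  {g | g ∈ Nset p d ∧
    ∀ i j : Fin (d + 1), ‖(g : Matrix (Fin (d + 1)) (Fin (d + 1)) ℚ_[p]) i j‖ ≤ 1}

/-- The group `T_0` of diagonal matrices in `GL_{d+1}(ℤ_p)`, as a set. -/
def T₀set : Set (GL' p d) :=
  {t | t ∈ Tset p d ∧
    ∀ i : Fin (d + 1), ‖(t : Matrix (Fin (d + 1)) (Fin (d + 1)) ℚ_[p]) i i‖ = 1}

/-- The set `P_0 = T_0 · N_0`. -/
def P₀set : Set (GL' p d) := T₀set p d * N₀set p d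

/-- The centre `Z ≅ ℚ_p^×` of `GL_{d+1}(ℚ_p)` (the invertible scalar matrices),
as a set. -/
def Zset : Set (GL' p d) :=
  {z | ∃ c : ℚ_[p]ˣ,
    (z : Matrix (Fin (d + 1)) (Fin (d + 1)) ℚ_[p]) = (c : ℚ_[p]) • (1 : Matrix _ _ _)}

/-- The dominant submonoid `T_+ = {t ∈ T ∣ tN_0t⁻¹ ⊆ N_0}`, as a set. -/
def Tplusset : Set (GL' p d) :=
  {t | t ∈ Tset p d ∧ ∀ n ∈ N₀set p d, t * n * t⁻¹ ∈ N₀set p d}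

/-- The monoid `P_+ = N_0 · T_+`, as a set. -/
def Pplusset : Set (GL' p d) := N₀set p d * Tplusset p d

/-- The unipotent group `N` of lower unitriangular matrices over `ℚ_p`, as a
topological space. -/
def Ntype := {x : Matrix (Fin (d + 1)) (Fin (d + 1)) ℚ_[p] //
  (∀ i, x i i = 1) ∧ ∀ i j : Fin (d + 1), i < j → x i j = 0}

instance : TopologicalSpace (Ntype p d) := instTopologicalSpaceSubtype

variable (kk : Type*) [Field kk]

/-- `V_St := C_c^∞(N, k)`: the space of locally constant compactly supported `k`-valued
functions on `N`, realized as a submodule of the locally constant functions. -/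
def VStSub : Submodule kk (LocallyConstant (Ntype p d) kk) where
  carrier := {f | HasCompactSupport ⇑f}
  zero_mem' := by
    show HasCompactSupport ⇑(0 : LocallyConstant (Ntype p d) kk)
    rw [LocallyConstant.coe_zero, HasCompactSupport]
    simp [tsupport]
  add_mem' := by
    intro f g hf hg
    show HasCompactSupport ⇑(f + g)
    rw [LocallyConstant.coe_add]
    exact hf.add hg
  smul_mem' := by
    intro c f hf
    show HasCompactSupport ⇑(c • f)
    refine IsCompact.of_isClosed_subset hf isClosed_closure (closure_mono ?_)
    rw [LocallyConstant.coe_smul]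
    exact Function.support_const_smul_subset c ⇑f

/-- The subspace `C_c^∞(S) ⊆ V_St` of functions supported in a subset `S ⊆ N`. -/
def suppIn (S : Set (Ntype p d)) : Submodule kk ↥(VStSub p d kk) where
  carrier := {f | ∀ x : Ntype p d, x ∉ S → (f : LocallyConstant (Ntype p d) kk) x = 0}
  zero_mem' := fun x _ => rfl
  add_mem' := by
    intro f g hf hg x hx
    show ((f : LocallyConstant (Ntype p d) kk) + g) x = 0
    rw [LocallyConstant.add_apply, hf x hx, hg x hx, add_zero]
  smul_mem' := by
    intro c f hf x hx
    show (c • (f : LocallyConstant (Ntype p d) kk)) x = 0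
    rw [LocallyConstant.smul_apply, hf x hx, smul_zero]

/-- Lower unitriangular matrices with integral entries (the underlying set of `N_0`). -/
def integralUni (y : Matrix (Fin (d + 1)) (Fin (d + 1)) ℚ_[p]) : Prop :=
  (∀ i, y i i = 1) ∧ (∀ i j : Fin (d + 1), i < j → y i j = 0) ∧ ∀ i j, ‖y i j‖ ≤ 1

/-- The subset `N_0 ⊆ N`. -/
def N₀Nset : Set (Ntype p d) := {x | integralUni p d x.1}

/-- The subset `φ_k N_0 φ_k⁻¹ ⊆ N`. -/
def conjN0 (k : ℕ) : Set (Ntype p d) :=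
  {x | ∃ y, integralUni p d y ∧
    x.1 = (phiDiag p d k).val * y * ((phiDiag p d k)⁻¹ : GL' p d).val}

/-- `p·L` for a submodule `L`. -/
def pSub (L : Submodule ℤ_[p] (Vsp p d)) : Submodule ℤ_[p] (Vsp p d) :=
  Submodule.map (scalarMap p d (p : ℚ_[p])) L

/-- `s` is a `q`-simplex of the Bruhat–Tits building: it consists of `q+1` homothety
classes of lattices admitting representatives `pL_0 ⊊ L_q ⊊ ⋯ ⊊ L_1 ⊊ L_0`. -/
def IsSimpCard (q : ℕ) (s : Finset (Vtx p d)) : Prop :=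
  s.card = q + 1 ∧
  ∃ L : Fin (q + 1) → LatZ p d,
    (∀ i j : Fin (q + 1), i < j → (L j).1 < (L i).1) ∧
    pSub p d (L 0).1 < (L (Fin.last q)).1 ∧
    s = Finset.image (fun i => (Quotient.mk (latSetoid p d) (L i) : Vtx p d)) Finset.univ

/-- The set of `q`-simplices. -/
def BTq (q : ℕ) := {s : Finset (Vtx p d) // IsSimpCard p d q s}

/-- The oriented chain group `C_q = ⊕_{η ∈ BT_q} V_η` of a coefficient system `Vc`. -/
def Cc (Vc : Finset (Vtx p d) → Submodule kk ↥(VStSub p d kk)) (q : ℕ) : Type _ :=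
  ⨁ η : BTq p d q, ↥(Vc η.1)

set_option maxSynthPendingDepth 3 in
instance (Vc : Finset (Vtx p d) → Submodule kk ↥(VStSub p d kk)) (q : ℕ) :
    AddCommGroup (Cc p d kk Vc q) :=
  inferInstanceAs (AddCommGroup (⨁ η : BTq p d q, ↥(Vc η.1)))

instance (Vc : Finset (Vtx p d) → Submodule kk ↥(VStSub p d kk)) (q : ℕ) :
    Module kk (Cc p d kk Vc q) :=
  inferInstanceAs (Module kk (⨁ η : BTq p d q, ↥(Vc η.1)))

/-- The boundary map `∂_{q+1} : C_{q+1} → C_q` of the oriented chain complex, with signs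
given by the incidence numbers `inc`. -/
def bdry (Vc : Finset (Vtx p d) → Submodule kk ↥(VStSub p d kk))
    (hface : ∀ s s' : Finset (Vtx p d), s' ⊆ s → Vc s ≤ Vc s')
    (inc : Finset (Vtx p d) → Finset (Vtx p d) → ℤ) (q : ℕ) :
    Cc p d kk Vc (q + 1) →ₗ[kk] Cc p d kk Vc q :=
  DirectSum.toModule kk _ _ fun η =>
    ∑ s' ∈ (η.1.powerset.filter fun s' => IsSimpCard p d q s').attach,
      inc η.1 s'.1 •
        ((DirectSum.lof kk (BTq p d q) (fun η' => ↥(Vc η'.1))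
            ⟨s'.1, (Finset.mem_filter.mp s'.2).2⟩).comp
          (Submodule.inclusion
            (hface _ _ (Finset.mem_powerset.mp (Finset.mem_filter.mp s'.2).1))))

/-- The augmentation `C_0 → V_St` given by the inclusions `V_x ⊆ V_St`. -/
def aug (Vc : Finset (Vtx p d) → Submodule kk ↥(VStSub p d kk)) :
    Cc p d kk Vc 0 →ₗ[kk] ↥(VStSub p d kk) :=
  DirectSum.toModule kk _ _ fun η => (Vc η.1).subtype

/-! ### Compact induction -/

section Induction

variable {p d : ℕ} [Fact (Nat.Prime p)] {kk : Type*} [Field kk]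
variable (W : Type*) [AddCommGroup W] [Module kk W]
variable (H PP : Set (GL' p d)) (ρW : GL' p d → W →ₗ[kk] W)

/-- The compactly induced representation `ind_H^{PP}(W)`: functions `f` on the group
(vanishing outside `PP`) with `f(gb) = b⁻¹·f(g)` for `b ∈ H`, supported on finitely many
cosets `gH`. -/
def IndSub : Submodule kk (GL' p d → W) where
  carrier := {f | (∀ g : GL' p d, ∀ b ∈ H, f (g * b) = ρW b⁻¹ (f g)) ∧
    (∀ x : GL' p d, x ∉ PP → f x = 0) ∧
    ∃ F : Finset (GL' p d), ↑F ⊆ PP ∧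
      ∀ x : GL' p d, f x ≠ 0 → ∃ g ∈ F, ∃ h ∈ H, x = g * h}
  zero_mem' := by
    refine ⟨fun g b _ => by simp, fun x _ => rfl, ∅, by simp, fun x hx => absurd rfl hx⟩
  add_mem' := by
    rintro f g ⟨hf1, hf2, Ff, hFf, hFf'⟩ ⟨hg1, hg2, Fg, hFg, hFg'⟩
    refine ⟨fun x b hb => by simp [Pi.add_apply, hf1 x b hb, hg1 x b hb],
      fun x hx => by simp [Pi.add_apply, hf2 x hx, hg2 x hx],
      Ff ∪ Fg, by
        rw [Finset.coe_union]
        exact Set.union_subset hFf hFg, fun x hx => ?_⟩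
    by_cases h : f x = 0
    · rcases hFg' x (by simpa [Pi.add_apply, h] using hx) with ⟨a, ha, b, hb, rfl⟩
      exact ⟨a, Finset.mem_union_right _ ha, b, hb, rfl⟩
    · rcases hFf' x h with ⟨a, ha, b, hb, rfl⟩
      exact ⟨a, Finset.mem_union_left _ ha, b, hb, rfl⟩
  smul_mem' := by
    rintro c f ⟨hf1, hf2, Ff, hFf, hFf'⟩
    refine ⟨fun x b hb => by simp [Pi.smul_apply, hf1 x b hb],
      fun x hx => by simp [Pi.smul_apply, hf2 x hx], Ff, hFf, fun x hx => ?_⟩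
    refine hFf' x fun h => hx ?_
    simp [Pi.smul_apply, h]

/-- The "delta function" in the induced representation supported on the coset `g₀H` with
value `w` at `g₀`. -/
def indDelta (g₀ : GL' p d) (w : W) : GL' p d → W :=
  fun x => if g₀⁻¹ * x ∈ H then ρW (x⁻¹ * g₀) w else 0

lemma indDelta_mem (hHP : H ⊆ PP) (hPmul : ∀ a ∈ PP, ∀ b ∈ PP, a * b ∈ PP)
    (hHmul : ∀ a ∈ H, ∀ b ∈ H, a * b ∈ H) (hHinv : ∀ a ∈ H, a⁻¹ ∈ H)
    (hρWmul : ∀ a ∈ H, ∀ b ∈ H, ρW (a * b) = (ρW a).comp (ρW b))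
    (g₀ : GL' p d) (hg₀ : g₀ ∈ PP) (w : W) :
    indDelta W H ρW g₀ w ∈ IndSub W H PP ρW := by
  refine ⟨fun g b hb => ?_, fun x hx => ?_, {g₀}, by simpa using hg₀, fun x hx => ?_⟩
  · by_cases h : g₀⁻¹ * g ∈ H
    · have h2 : g₀⁻¹ * (g * b) ∈ H := by
        rw [← mul_assoc]
        exact hHmul _ h _ hb
      have h3 : g⁻¹ * g₀ ∈ H := by
        have : g⁻¹ * g₀ = (g₀⁻¹ * g)⁻¹ := by group
        rw [this]
        exact hHinv _ h
      rw [indDelta, if_pos h2, indDelta, if_pos h]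
      have h4 : (g * b)⁻¹ * g₀ = b⁻¹ * (g⁻¹ * g₀) := by group
      rw [h4, hρWmul _ (hHinv _ hb) _ h3, LinearMap.comp_apply]
    · have h2 : g₀⁻¹ * (g * b) ∉ H := by
        intro hcon
        apply h
        have : g₀⁻¹ * g = g₀⁻¹ * (g * b) * b⁻¹ := by group
        rw [this]
        exact hHmul _ hcon _ (hHinv _ hb)
      rw [indDelta, if_neg h2, indDelta, if_neg h, map_zero]
  · rw [indDelta]
    split_ifs with h
    · exfalso
      apply hx
      have : x = g₀ * (g₀⁻¹ * x) := by group
      rw [this]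
      exact hPmul _ hg₀ _ (hHP h)
    · rfl
  · rw [indDelta] at hx
    by_cases h : g₀⁻¹ * x ∈ H
    · exact ⟨g₀, Finset.mem_singleton_self _, g₀⁻¹ * x, h, by group⟩
    · exact absurd (if_neg h) hx

end Induction

/-- The `P_0Z`-subrepresentation
`V_q = ⊕_{|J| = q} ⊕_{b₀ ∈ P₀} V_{b₀·η_J}` of `⊕_{η ∈ BT_q} V_η`. -/
def VqSub (p d : ℕ) [Fact (Nat.Prime p)] (kk : Type*) [Field kk]
    (Vc : Finset (Vtx p d) → Submodule kk ↥(VStSub p d kk)) (q : ℕ) :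
    Submodule kk (Cc p d kk Vc q) :=
  ⨆ (η : BTq p d q) (_ : ∃ b ∈ P₀set p d, ∃ J : Finset (Fin d),
      J.card = q ∧ η.1 = Finset.image (vAct p d b) (etaJ p d J)),
    LinearMap.range (DirectSum.lof kk (BTq p d q) (fun η' => ↥(Vc η'.1)) η)


/-! ### Group action on vertices -/

section Helpers

variable (p : ℕ) [Fact (Nat.Prime p)] (d : ℕ)

lemma aux_glMap_mul (g h : GL' p d) :
    glMap p d (g * h) = (glMap p d g).comp (glMap p d h) := by
  refine LinearMap.ext fun v => ?_
  show ((g * h : GL' p d) : Matrix (Fin (d + 1)) (Fin (d + 1)) ℚ_[p]).mulVec v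
    = (g : Matrix (Fin (d + 1)) (Fin (d + 1)) ℚ_[p]).mulVec
      ((h : Matrix (Fin (d + 1)) (Fin (d + 1)) ℚ_[p]).mulVec v)
  rw [Matrix.mulVec_mulVec, Units.val_mul]

lemma aux_glMap_one : glMap p d 1 = LinearMap.id := by
  refine LinearMap.ext fun v => ?_
  show ((1 : GL' p d) : Matrix (Fin (d + 1)) (Fin (d + 1)) ℚ_[p]).mulVec v = v
  rw [Units.val_one, Matrix.one_mulVec]

lemma aux_vAct_mul (g h : GL' p d) (x : Vtx p d) :
    vAct p d (g * h) x = vAct p d g (vAct p d h x) := by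
  induction x using Quotient.inductionOn with
  | h L =>
    show (Quotient.mk _ (latAct p d (g * h) L) : Vtx p d)
      = Quotient.mk _ (latAct p d g (latAct p d h L))
    congr 1
    apply Subtype.ext
    show Submodule.map (glMap p d (g * h)) L.1
      = Submodule.map (glMap p d g) (Submodule.map (glMap p d h) L.1)
    rw [aux_glMap_mul, Submodule.map_comp]

lemma aux_vAct_one (x : Vtx p d) : vAct p d 1 x = x := by
  induction x using Quotient.inductionOn with
  | h L =>
    show (Quotient.mk _ (latAct p d 1 L) : Vtx p d) = Quotient.mk _ L
    congr 1
    apply Subtype.ext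
    show Submodule.map (glMap p d 1) L.1 = L.1
    rw [aux_glMap_one, Submodule.map_id]

lemma aux_vAct_inv (g : GL' p d) (x : Vtx p d) :
    vAct p d g⁻¹ (vAct p d g x) = x := by
  rw [← aux_vAct_mul, inv_mul_cancel, aux_vAct_one]

lemma aux_vAct_inj (g : GL' p d) : Function.Injective (vAct p d g) :=
  Function.LeftInverse.injective (aux_vAct_inv p d g)

lemma aux_image_mul (g h : GL' p d) (s : Finset (Vtx p d)) :
    Finset.image (vAct p d (g * h)) s
      = Finset.image (vAct p d g) (Finset.image (vAct p d h) s) := by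
  rw [Finset.image_image]
  congr 1
  funext x
  exact aux_vAct_mul p d g h x

lemma aux_image_one (s : Finset (Vtx p d)) :
    Finset.image (vAct p d 1) s = s := by
  have : vAct p d 1 = id := funext (aux_vAct_one p d)
  rw [this, Finset.image_id]

lemma aux_glMap_inj (g : GL' p d) : Function.Injective (glMap p d g) := by
  have h : Function.LeftInverse (glMap p d g⁻¹) (glMap p d g) := by
    intro v
    have := congrArg (fun f => f v) (aux_glMap_mul p d g⁻¹ g)
    rw [inv_mul_cancel, aux_glMap_one] at this
    exact this.symm
  exact h.injective

lemma aux_img {α β γ : Type*} (i1 : DecidableEq β) (i2 i3 : DecidableEq γ)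
    (f : α → β) (g : β → γ) (s : Finset α) :
    @Finset.image _ _ i2 g (@Finset.image _ _ i1 f s) = @Finset.image _ _ i3 (g ∘ f) s := by
  ext x
  simp

lemma aux_simp (g : GL' p d) (q : ℕ) (s : Finset (Vtx p d)) (hs : IsSimpCard p d q s) :
    IsSimpCard p d q (Finset.image (vAct p d g) s) := by
  obtain ⟨hc, L, h1, h2, h3⟩ := hs
  have hmono : StrictMono (Submodule.map (glMap p d g)) :=
    Submodule.map_strictMono_of_injective (aux_glMap_inj p d g)
  refine ⟨by rw [Finset.card_image_of_injective _ (aux_vAct_inj p d g), hc],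
    fun i => latAct p d g (L i), fun i j hij => hmono (h1 i j hij), ?_, ?_⟩
  · have := hmono h2
    unfold pSub at this ⊢
    rw [← Submodule.map_comp, glMap_scalar_comm, Submodule.map_comp] at this
    exact this
  · rw [h3]
    exact @aux_img _ _ _ _ _ _ _ _ _

/-! ### The standard lattice -/

lemma aux_mem_L0_norm (v : Vsp p d) (hv : v ∈ L0 p d) (i : Fin (d + 1)) : ‖v i‖ ≤ 1 := by
  unfold L0 at hv
  induction hv using Submodule.span_induction with
  | mem x hx =>
    obtain ⟨j, rfl⟩ := hx
    by_cases h : i = j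
    · subst h; simp
    · simp [h]
  | zero => simp
  | add x y _ _ hx hy =>
    exact (Padic.nonarchimedean (x i) (y i)).trans (max_le hx hy)
  | smul a x _ hx =>
    have h1 : (a • x) i = (a : ℚ_[p]) * x i := rfl
    rw [h1, norm_mul]
    exact mul_le_one₀ a.2 (norm_nonneg _) hx

lemma aux_single_mem (j : Fin (d + 1)) : (Pi.single j (1 : ℚ_[p]) : Vsp p d) ∈ L0 p d :=
  Submodule.subset_span ⟨j, rfl⟩

lemma aux_stab (g : GL' p d) (h : vAct p d g (x0 p d) = x0 p d) :
    ∃ c : ℚ_[p]ˣ, (∀ i j, ‖g.val i j‖ ≤ ‖(c : ℚ_[p])‖) ∧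
      ∀ i j, ‖(g⁻¹ : GL' p d).val i j‖ ≤ ‖(c : ℚ_[p])‖⁻¹ := by
  obtain ⟨c, hc⟩ := Quotient.exact h
  have hc : Submodule.map (scalarMap p d (c : ℚ_[p]))
    (Submodule.map (glMap p d g) (L0 p d)) = L0 p d := hc
  have hc0 : (c : ℚ_[p]) ≠ 0 := c.ne_zero
  have hcn : 0 < ‖(c : ℚ_[p])‖ := norm_pos_iff.mpr hc0
  refine ⟨c⁻¹, fun i j => ?_, fun i j => ?_⟩
  · have hm : scalarMap p d (c : ℚ_[p]) (glMap p d g (Pi.single j 1)) ∈ L0 p d := by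
      rw [← hc]
      exact Submodule.mem_map_of_mem (Submodule.mem_map_of_mem (aux_single_mem p d j))
    have h1 := aux_mem_L0_norm p d _ hm i
    have h2 : scalarMap p d (c : ℚ_[p]) (glMap p d g (Pi.single j 1)) i
        = (c : ℚ_[p]) * g.val i j := by
      show (c : ℚ_[p]) * (g.val.mulVec (Pi.single j 1)) i = _
      rw [Matrix.mulVec_single_one]; rfl
    rw [h2, norm_mul] at h1
    rw [Units.val_inv_eq_inv_val, norm_inv]
    rwa [← one_div, le_div_iff₀' hcn]
  · have hm := aux_single_mem p d j
    rw [← hc] at hm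
    obtain ⟨w, ⟨v, hv, rfl⟩, hw⟩ := hm
    have h1 : (g⁻¹ : GL' p d).val.mulVec ((c : ℚ_[p]) • g.val.mulVec v)
        = (g⁻¹ : GL' p d).val.mulVec (Pi.single j 1) := congrArg _ hw
    rw [Matrix.mulVec_smul, Matrix.mulVec_mulVec, Units.inv_mul, Matrix.one_mulVec,
      Matrix.mulVec_single_one] at h1
    have h2 : (c : ℚ_[p]) * v i = (g⁻¹ : GL' p d).val i j := congrFun h1 i
    rw [← h2, norm_mul, Units.val_inv_eq_inv_val, norm_inv, inv_inv]
    exact mul_le_of_le_one_right (norm_nonneg _) (aux_mem_L0_norm p d v hv i)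

lemma aux_diag_mul (g h : GL' p d) (hg : g ∈ Pset p d) (hh : h ∈ Pset p d)
    (i : Fin (d + 1)) : (g * h).val i i = g.val i i * h.val i i := by
  rw [Units.val_mul, Matrix.mul_apply]
  apply Finset.sum_eq_single_of_mem _ (Finset.mem_univ _)
  intro j _ hj
  rcases lt_or_gt_of_ne hj with h1 | h1
  · rw [hh j i h1, mul_zero]
  · rw [hg i j h1, zero_mul]

lemma aux_one_mem : (1 : GL' p d) ∈ Pset p d := by
  intro i j hij
  rw [Units.val_one, Matrix.one_apply_ne hij.ne]

lemma aux_diag_inv (hPinv : ∀ a ∈ Pset p d, a⁻¹ ∈ Pset p d) (g : GL' p d)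
    (hg : g ∈ Pset p d) (i : Fin (d + 1)) :
    g.val i i * (g⁻¹ : GL' p d).val i i = 1 := by
  rw [← aux_diag_mul p d g g⁻¹ hg (hPinv g hg), mul_inv_cancel, Units.val_one,
    Matrix.one_apply_eq]

lemma aux_stab' (hPinv : ∀ a ∈ Pset p d, a⁻¹ ∈ Pset p d) (g : GL' p d)
    (hg : g ∈ Pset p d) (h : vAct p d g (x0 p d) = x0 p d) :
    ∃ c : ℚ_[p]ˣ, (∀ i j, ‖g.val i j‖ ≤ ‖(c : ℚ_[p])‖) ∧
      ∀ i, ‖g.val i i‖ = ‖(c : ℚ_[p])‖ := by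
  obtain ⟨c, h1, h2⟩ := aux_stab p d g h
  have hcn : 0 < ‖(c : ℚ_[p])‖ := norm_pos_iff.mpr c.ne_zero
  refine ⟨c, h1, fun i => le_antisymm (h1 i i) ?_⟩
  have h3 := congrArg norm (aux_diag_inv p d hPinv g hg i)
  rw [norm_mul, norm_one] at h3
  have h4 : 1 ≤ ‖g.val i i‖ * ‖(c : ℚ_[p])‖⁻¹ := by
    rw [← h3]
    exact mul_le_mul_of_nonneg_left (h2 i i) (norm_nonneg _)
  rwa [← div_eq_mul_inv, one_le_div hcn] at h4

lemma aux_phi_mem (k : ℕ) : phiDiag p d k ∈ Pset p d := by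
  intro i j hij
  exact Matrix.diagonal_apply_ne _ hij.ne

lemma aux_phi_norm (k : ℕ) (i : Fin (d + 1)) :
    ‖(phiDiag p d k).val i i‖ = if (i : ℕ) < k then 1 else (p : ℝ)⁻¹ := by
  have : (phiDiag p d k).val i i = if (i : ℕ) < k then 1 else (p : ℚ_[p]) :=
    Matrix.diagonal_apply_eq _ i
  rw [this]
  split_ifs <;> simp

lemma aux_phi_one : phiDiag p d (d + 1) = 1 := by
  apply Units.ext
  show Matrix.diagonal _ = (1 : Matrix (Fin (d + 1)) (Fin (d + 1)) ℚ_[p])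
  rw [← Matrix.diagonal_one]
  congr 1
  funext i
  simp [i.2]

lemma aux_move (hPinv : ∀ a ∈ Pset p d, a⁻¹ ∈ Pset p d)
    (hPmul : ∀ a ∈ Pset p d, ∀ b ∈ Pset p d, a * b ∈ Pset p d)
    (g : GL' p d) (hg : g ∈ Pset p d) (k k' : ℕ)
    (h : vAct p d g (vAct p d (phiDiag p d k) (x0 p d))
      = vAct p d (phiDiag p d k') (x0 p d)) :
    ∃ c : ℝ, 0 < c ∧ ∀ i : Fin (d + 1),
      ‖g.val i i‖ * (if (i : ℕ) < k then 1 else (p : ℝ)⁻¹)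
        = c * (if (i : ℕ) < k' then 1 else (p : ℝ)⁻¹) := by
  have hk := aux_phi_mem p d k
  have hk' := aux_phi_mem p d k'
  have hki := hPinv _ hk'
  have h1 : vAct p d ((phiDiag p d k')⁻¹ * (g * phiDiag p d k)) (x0 p d) = x0 p d := by
    rw [aux_vAct_mul, aux_vAct_mul, h, aux_vAct_inv]
  obtain ⟨c, -, h2⟩ := aux_stab' p d hPinv _ (hPmul _ hki _ (hPmul _ hg _ hk)) h1
  refine ⟨‖(c : ℚ_[p])‖, norm_pos_iff.mpr c.ne_zero, fun i => ?_⟩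
  have h3 := h2 i
  rw [aux_diag_mul p d _ _ hki (hPmul _ hg _ hk), aux_diag_mul p d _ _ hg hk, norm_mul,
    norm_mul] at h3
  have h4 := congrArg norm (aux_diag_inv p d hPinv _ hk' i)
  rw [norm_mul, norm_one] at h4
  rw [← aux_phi_norm p d k, ← aux_phi_norm p d k', ← h3]
  calc _ = ‖g.val i i‖ * ‖(phiDiag p d k).val i i‖ * 1 := by ring
    _ = _ := by rw [← h4]; ring

lemma aux_mem_P0Z (hPinv : ∀ a ∈ Pset p d, a⁻¹ ∈ Pset p d)
    (hPmul : ∀ a ∈ Pset p d, ∀ b ∈ Pset p d, a * b ∈ Pset p d)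
    (g : GL' p d) (hg : g ∈ Pset p d) (h : vAct p d g (x0 p d) = x0 p d) :
    g ∈ P₀set p d * Zset p d := by
  obtain ⟨c, h1, h2⟩ := aux_stab' p d hPinv g hg h
  have hc0 : (c : ℚ_[p]) ≠ 0 := c.ne_zero
  have hcn : 0 < ‖(c : ℚ_[p])‖ := norm_pos_iff.mpr hc0
  have hgi : ∀ i, g.val i i ≠ 0 := fun i => by
    rw [← norm_pos_iff, h2 i]; exact hcn
  -- the scalar matrix
  let z : GL' p d := ⟨Matrix.diagonal fun _ => (c : ℚ_[p]),
    Matrix.diagonal fun _ => (c : ℚ_[p])⁻¹, by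
      rw [Matrix.diagonal_mul_diagonal]; simp [hc0], by
      rw [Matrix.diagonal_mul_diagonal]; simp [hc0]⟩
  let t : GL' p d := ⟨Matrix.diagonal fun i => g.val i i * (c : ℚ_[p])⁻¹,
    Matrix.diagonal fun i => (g.val i i)⁻¹ * c, by
      rw [Matrix.diagonal_mul_diagonal, ← Matrix.diagonal_one]
      congr 1; funext i; have := hgi i; field_simp, by
      rw [Matrix.diagonal_mul_diagonal, ← Matrix.diagonal_one]
      congr 1; funext i; have := hgi i; field_simp⟩
  have hn : ∀ i j, (t⁻¹ * (g * z⁻¹)).val i j = (g.val i i)⁻¹ * g.val i j := by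
    intro i j
    rw [Units.val_mul, Units.val_mul]
    show ((Matrix.diagonal (fun i => (g.val i i)⁻¹ * (c : ℚ_[p])) *
      (g.val * Matrix.diagonal fun _ => (c : ℚ_[p])⁻¹) :
        Matrix (Fin (d + 1)) (Fin (d + 1)) ℚ_[p])) i j = _
    rw [Matrix.diagonal_mul, Matrix.mul_diagonal]
    field_simp
  refine Set.mem_mul.mpr ⟨t * (t⁻¹ * (g * z⁻¹)), ?_, z, ⟨c, ?_⟩, by group⟩
  · refine Set.mem_mul.mpr ⟨t, ⟨fun i j hij => Matrix.diagonal_apply_ne _ hij, fun i => ?_⟩,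
      _, ⟨⟨fun i => ?_, fun i j hij => ?_⟩, fun i j => ?_⟩, rfl⟩
    · have : t.val i i = g.val i i * (c : ℚ_[p])⁻¹ := Matrix.diagonal_apply_eq _ i
      rw [this, norm_mul, norm_inv, h2 i, mul_inv_cancel₀ hcn.ne']
    · rw [hn, inv_mul_cancel₀ (hgi i)]
    · rw [hn, hg i j hij, mul_zero]
    · rw [hn, norm_mul, norm_inv, h2 i, inv_mul_le_iff₀ hcn, mul_one]
      exact h1 i j
  · show Matrix.diagonal _ = _
    rw [Matrix.smul_one_eq_diagonal]

lemma aux_mem_eta (J : Finset (Fin d)) (x : Vtx p d) (hx : x ∈ etaJ p d J) :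
    ∃ k : ℕ, 1 ≤ k ∧ x = vAct p d (phiDiag p d k) (x0 p d) := by
  unfold etaJ at hx
  rcases Finset.mem_insert.mp hx with rfl | hx
  · exact ⟨d + 1, by omega, by rw [aux_phi_one, aux_vAct_one]⟩
  · obtain ⟨j, _, rfl⟩ := Finset.mem_image.mp hx
    exact ⟨(j : ℕ) + 1, by omega, rfl⟩

lemma aux_pinv : (p : ℝ)⁻¹ < 1 :=
  inv_lt_one_of_one_lt₀ (by exact_mod_cast (Fact.out (p := Nat.Prime p)).one_lt)

lemma aux_phi_dist (hPinv : ∀ a ∈ Pset p d, a⁻¹ ∈ Pset p d)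
    (hPmul : ∀ a ∈ Pset p d, ∀ b ∈ Pset p d, a * b ∈ Pset p d)
    (k k' : ℕ) (hk : 1 ≤ k) (hkk : k < k') (hk' : k' ≤ d + 1)
    (h : vAct p d (phiDiag p d k) (x0 p d) = vAct p d (phiDiag p d k') (x0 p d)) : False := by
  obtain ⟨c, _, h1⟩ := aux_move p d hPinv hPmul 1 (aux_one_mem p d) k k'
    (by rw [aux_vAct_one, h])
  have h2 := h1 0
  have h3 := h1 ⟨k, by omega⟩
  rw [Units.val_one, Matrix.one_apply_eq, norm_one, one_mul] at h2 h3
  rw [if_pos (show ((0 : Fin (d + 1)) : ℕ) < k from hk),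
    if_pos (show ((0 : Fin (d + 1)) : ℕ) < k' from hk.trans hkk.le)] at h2
  rw [if_neg (show ¬ k < k by omega), if_pos (show k < k' from hkk)] at h3
  have := aux_pinv p
  linarith

lemma aux_eta_card (hPinv : ∀ a ∈ Pset p d, a⁻¹ ∈ Pset p d)
    (hPmul : ∀ a ∈ Pset p d, ∀ b ∈ Pset p d, a * b ∈ Pset p d)
    (J : Finset (Fin d)) : (etaJ p d J).card = J.card + 1 := by
  unfold etaJ
  rw [Finset.card_insert_of_notMem, Finset.card_image_of_injective]
  · intro i j hij
    rcases lt_trichotomy i j with h | h | h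
    · exact (aux_phi_dist p d hPinv hPmul ((i : ℕ) + 1) ((j : ℕ) + 1) (by omega)
        (by have : (i : ℕ) < j := h
            omega) (by omega) hij).elim
    · exact h
    · exact (aux_phi_dist p d hPinv hPmul ((j : ℕ) + 1) ((i : ℕ) + 1) (by omega)
        (by have : (j : ℕ) < i := h
            omega) (by omega) hij.symm).elim
  · intro hx
    obtain ⟨j, _, hj⟩ := Finset.mem_image.mp hx
    refine aux_phi_dist p d hPinv hPmul ((j : ℕ) + 1) (d + 1) (by omega) (by omega) le_rfl ?_
    rw [aux_phi_one, aux_vAct_one]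
    exact hj

lemma aux_key (hPinv : ∀ a ∈ Pset p d, a⁻¹ ∈ Pset p d)
    (hPmul : ∀ a ∈ Pset p d, ∀ b ∈ Pset p d, a * b ∈ Pset p d)
    (g : GL' p d) (hg : g ∈ Pset p d) (J J' : Finset (Fin d))
    (h : Finset.image (vAct p d g) (etaJ p d J) = etaJ p d J') :
    g ∈ P₀set p d * Zset p d := by
  have hx0 : ∀ J : Finset (Fin d), x0 p d ∈ etaJ p d J :=
    fun J => Finset.mem_insert_self _ _
  have hphi : vAct p d (phiDiag p d (d + 1)) (x0 p d) = x0 p d := by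
    rw [aux_phi_one, aux_vAct_one]
  have ha : vAct p d g (x0 p d) ∈ etaJ p d J' := by
    rw [← h]; exact Finset.mem_image_of_mem _ (hx0 J)
  have hb : x0 p d ∈ Finset.image (vAct p d g) (etaJ p d J) := by
    rw [h]; exact hx0 J'
  obtain ⟨y, hy, hy'⟩ := Finset.mem_image.mp hb
  obtain ⟨k, hk, hyk⟩ := aux_mem_eta p d J y hy
  obtain ⟨a, ha1, hya⟩ := aux_mem_eta p d J' _ ha
  obtain ⟨c, hc, h1⟩ := aux_move p d hPinv hPmul g hg (d + 1) a (by rw [hphi, hya])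
  obtain ⟨c', hc', h2⟩ := aux_move p d hPinv hPmul g hg k (d + 1) (by rw [hphi, ← hyk, hy'])
  have hlast : d < a := by
    by_contra hcon
    have e1 := h1 0
    have e2 := h2 0
    have e3 := h1 (Fin.last d)
    have e4 := h2 (Fin.last d)
    have z1 : ((0 : Fin (d + 1)) : ℕ) < d + 1 := Nat.succ_pos d
    have z2 : ((0 : Fin (d + 1)) : ℕ) < a := ha1
    have z3 : ((0 : Fin (d + 1)) : ℕ) < k := hk
    have z4 : ((Fin.last d : Fin (d + 1)) : ℕ) < d + 1 := Nat.lt_succ_self d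
    have z5 : ¬ ((Fin.last d : Fin (d + 1)) : ℕ) < a := hcon
    rw [if_pos z1, if_pos z2] at e1
    rw [if_pos z1, if_pos z3] at e2
    rw [if_pos z4, if_neg z5] at e3
    rw [if_pos z4] at e4
    have hcc : c = c' := by linarith
    have hp := aux_pinv p
    have hp0 : 0 ≤ (p : ℝ)⁻¹ := by positivity
    have e5 : ‖g.val (Fin.last d) (Fin.last d)‖ < c := by
      nlinarith
    have e6 : (if ((Fin.last d : Fin (d + 1)) : ℕ) < k then 1 else (p : ℝ)⁻¹) ≤ 1 := by split_ifs <;> linarith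
    have e7 := mul_le_mul_of_nonneg_left e6 (norm_nonneg (g.val (Fin.last d) (Fin.last d)))
    linarith
  have hphia : phiDiag p d a = 1 := by
    apply Units.ext
    show Matrix.diagonal _ = (1 : Matrix (Fin (d + 1)) (Fin (d + 1)) ℚ_[p])
    rw [← Matrix.diagonal_one]
    congr 1
    funext i
    rw [if_pos (by omega)]
  refine aux_mem_P0Z p d hPinv hPmul g hg ?_
  rw [hya, hphia, aux_vAct_one]

lemma aux_one_Z : (1 : GL' p d) ∈ Zset p d := ⟨1, by simp⟩

lemma aux_one_P0 : (1 : GL' p d) ∈ P₀set p d := by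
  refine Set.mem_mul.mpr ⟨1, ⟨fun i j hij => ?_, fun i => ?_⟩, 1,
    ⟨⟨fun i => ?_, fun i j hij => ?_⟩, fun i j => ?_⟩, one_mul 1⟩
  · rw [Units.val_one, Matrix.one_apply_ne hij]
  · simp
  · simp
  · rw [Units.val_one, Matrix.one_apply_ne hij.ne]
  · rw [Units.val_one, Matrix.one_apply]
    split_ifs <;> simp

lemma aux_P0_sub : P₀set p d ⊆ P₀set p d * Zset p d := fun x hx =>
  Set.mem_mul.mpr ⟨x, hx, 1, aux_one_Z p d, mul_one x⟩

/-- The inclusion of a summand. -/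
def auxLof (kk : Type*) [Field kk]
    (Vc : Finset (Vtx p d) → Submodule kk ↥(VStSub p d kk)) (q : ℕ) (η : BTq p d q) :
    ↥(Vc η.1) →ₗ[kk] Cc p d kk Vc q :=
  DirectSum.lof kk (BTq p d q) (fun η' => ↥(Vc η'.1)) η

lemma auxLof_induction (kk : Type*) [Field kk]
    (Vc : Finset (Vtx p d) → Submodule kk ↥(VStSub p d kk)) (q : ℕ)
    (M : Submodule kk (Cc p d kk Vc q))
    (h : ∀ (η : BTq p d q) (v : ↥(Vc η.1)), auxLof p d kk Vc q η v ∈ M)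
    (x : Cc p d kk Vc q) : x ∈ M :=
  DirectSum.induction_on (motive := fun x => x ∈ M) x (Submodule.zero_mem M) h
    (fun _ _ hx hy => Submodule.add_mem M hx hy)

lemma aux_lof_congr (kk : Type*) [Field kk]
    (Vc : Finset (Vtx p d) → Submodule kk ↥(VStSub p d kk)) (q : ℕ)
    (η η' : BTq p d q) (h : η = η') (v : ↥(Vc η.1)) (v' : ↥(Vc η'.1)) (hv : v.1 = v'.1) :
    auxLof p d kk Vc q η v
      = auxLof p d kk Vc q η' v' := by
  subst h
  rw [Subtype.ext hv]

/-- Simplices in the `P_0`-orbits of the standard simplices. -/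
def auxS (q : ℕ) (η : BTq p d q) : Prop :=
  ∃ b ∈ P₀set p d, ∃ J : Finset (Fin d),
      J.card = q ∧ η.1 = Finset.image (vAct p d b) (etaJ p d J)

/-- Translated family. -/
def auxGS (q : ℕ) (g : GL' p d) (η : BTq p d q) : Prop :=
  ∃ η0 : BTq p d q, auxS p d q η0 ∧ η.1 = Finset.image (vAct p d g) η0.1

/-- Projection to the components in a family. -/
def auxProj (kk : Type*) [Field kk]
    (Vc : Finset (Vtx p d) → Submodule kk ↥(VStSub p d kk)) (q : ℕ)
    (A : BTq p d q → Prop) : Cc p d kk Vc q →ₗ[kk] Cc p d kk Vc q :=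
  DFinsupp.filterLinearMap kk (fun η : BTq p d q => ↥(Vc η.1)) A

lemma auxProj_pos (kk : Type*) [Field kk]
    (Vc : Finset (Vtx p d) → Submodule kk ↥(VStSub p d kk)) (q : ℕ)
    (A : BTq p d q → Prop) (η : BTq p d q) (h : A η) (v : ↥(Vc η.1)) :
    auxProj p d kk Vc q A (auxLof p d kk Vc q η v)
      = auxLof p d kk Vc q η v :=
  DFinsupp.filter_single_pos (β := fun η : BTq p d q => ↥(Vc η.1)) (p := A) η v h

lemma auxProj_neg (kk : Type*) [Field kk]
    (Vc : Finset (Vtx p d) → Submodule kk ↥(VStSub p d kk)) (q : ℕ)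
    (A : BTq p d q → Prop) (η : BTq p d q) (h : ¬ A η) (v : ↥(Vc η.1)) :
    auxProj p d kk Vc q A (auxLof p d kk Vc q η v) = 0 :=
  DFinsupp.filter_single_neg (β := fun η : BTq p d q => ↥(Vc η.1)) (p := A) η v h

lemma aux_disj (hPinv : ∀ a ∈ Pset p d, a⁻¹ ∈ Pset p d)
    (hPmul : ∀ a ∈ Pset p d, ∀ b ∈ Pset p d, a * b ∈ Pset p d)
    (hHP : P₀set p d * Zset p d ⊆ Pset p d)
    (hHmul : ∀ a ∈ P₀set p d * Zset p d, ∀ b ∈ P₀set p d * Zset p d,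
      a * b ∈ P₀set p d * Zset p d)
    (hHinv : ∀ a ∈ P₀set p d * Zset p d, a⁻¹ ∈ P₀set p d * Zset p d)
    (q : ℕ) (g g' : GL' p d) (hg : g ∈ Pset p d) (hg' : g' ∈ Pset p d) (η : BTq p d q)
    (h : auxGS p d q g η) (h' : auxGS p d q g' η) : g⁻¹ * g' ∈ P₀set p d * Zset p d := by
  obtain ⟨η1, ⟨b, hb, J, _, e1⟩, e2⟩ := h
  obtain ⟨η2, ⟨b', hb', J', _, e1'⟩, e2'⟩ := h'
  have hbH := aux_P0_sub p d hb
  have hbH' := aux_P0_sub p d hb'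
  rw [e1, ← aux_image_mul] at e2
  rw [e1', ← aux_image_mul] at e2'
  have e3 : Finset.image (vAct p d ((g * b)⁻¹ * (g' * b'))) (etaJ p d J') = etaJ p d J := by
    rw [aux_image_mul, ← e2', e2, ← aux_image_mul, inv_mul_cancel, aux_image_one]
  have h4 := aux_key p d hPinv hPmul _
    (hPmul _ (hPinv _ (hPmul _ hg _ (hHP hbH))) _ (hPmul _ hg' _ (hHP hbH'))) J' J e3
  have h5 : g⁻¹ * g' = b * ((g * b)⁻¹ * (g' * b')) * b'⁻¹ := by group
  rw [h5]
  exact hHmul _ (hHmul _ hbH _ h4) _ (hHinv _ hbH')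

end Helpers

/-- For every `0 ≤ q ≤ d` the natural `P`-equivariant map
`ind_{P_0Z}^P(V_q) → ⊕_{η ∈ BT_q} V_η` is an isomorphism of smooth `P`-representations,
where `V_q = ⊕_{|J|=q} ⊕_{n₀ ∈ N_0/∩_{j∈J}φ_jN_0φ_j⁻¹} V_{n₀·η_J}` is a
`P_0Z`-subrepresentation of `⊕_{η ∈ BT_q} V_η` on which `Z` acts trivially. -/
theorem stmt15 (p d : ℕ) [Fact (Nat.Prime p)] (hd : 1 ≤ d)
    (kk : Type*) [Field kk] (q : ℕ) (hq : q ≤ d)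
    -- the action of P on N
    (act : GL' p d → Ntype p d → Ntype p d)
    (hact : ∀ b ∈ Pset p d, ∀ x : Ntype p d,
      (act b x).1 = (b : Matrix (Fin (d + 1)) (Fin (d + 1)) ℚ_[p]) * x.1 *
        (Matrix.diagonal fun i => ((b : Matrix (Fin (d + 1)) (Fin (d + 1)) ℚ_[p]) i i)⁻¹))
    -- the coefficient system (V_η)_η
    (Vc : Finset (Vtx p d) → Submodule kk ↥(VStSub p d kk))
    (hVc1 : ∀ b ∈ Pset p d, ∀ J : Finset (Fin d),
      Vc (Finset.image (vAct p d b) (etaJ p d J)) =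
        suppIn p d kk (act b '' (N₀Nset p d ∩ ⋂ j ∈ J, conjN0 p d ((j : ℕ) + 1))))
    (hVc0 : ∀ s : Finset (Vtx p d),
      (¬ ∃ b ∈ Pset p d, ∃ J : Finset (Fin d), s = Finset.image (vAct p d b) (etaJ p d J)) →
      Vc s = ⊥)
    -- the smooth action ρ of P on V_St, and the induced action ρC on ⊕_{η ∈ BT_q} V_η
    (ρ : GL' p d → (↥(VStSub p d kk) →ₗ[kk] ↥(VStSub p d kk)))
    (hρval : ∀ b ∈ Pset p d, ∀ f : ↥(VStSub p d kk), ∀ x : Ntype p d,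
      ((ρ b f : ↥(VStSub p d kk)) : LocallyConstant (Ntype p d) kk) x
        = ((f : ↥(VStSub p d kk)) : LocallyConstant (Ntype p d) kk) (act b⁻¹ x))
    (hρmul : ∀ b ∈ Pset p d, ∀ b' ∈ Pset p d, ρ (b * b') = (ρ b).comp (ρ b'))
    (hVcmap : ∀ b, b ∈ Pset p d → ∀ (s : Finset (Vtx p d)) (v : ↥(VStSub p d kk)),
      v ∈ Vc s → ρ b v ∈ Vc (Finset.image (vAct p d b) s))
    (ρC : GL' p d → (Cc p d kk Vc q →ₗ[kk] Cc p d kk Vc q))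
    (hρC : ∀ b, ∀ hb : b ∈ Pset p d, ∀ (η : BTq p d q)
      (hbη : IsSimpCard p d q (Finset.image (vAct p d b) η.1)) (v : ↥(Vc η.1)),
      ρC b (DirectSum.lof kk (BTq p d q) (fun η' => ↥(Vc η'.1)) η v)
        = DirectSum.lof kk (BTq p d q) (fun η' => ↥(Vc η'.1))
            (⟨Finset.image (vAct p d b) η.1, hbη⟩ : BTq p d q)
            ⟨ρ b v.1, hVcmap b hb η.1 v.1 v.2⟩)
    (hρCmul : ∀ b ∈ Pset p d, ∀ b' ∈ Pset p d, ρC (b * b') = (ρC b).comp (ρC b'))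
    -- closure facts for P and P_0Z, and the restricted action ρW of P_0Z on V_q
    (hPmul : ∀ a ∈ Pset p d, ∀ b ∈ Pset p d, a * b ∈ Pset p d)
    (hPinv : ∀ a ∈ Pset p d, a⁻¹ ∈ Pset p d)
    (hHP : P₀set p d * Zset p d ⊆ Pset p d)
    (hHmul : ∀ a ∈ P₀set p d * Zset p d, ∀ b ∈ P₀set p d * Zset p d,
      a * b ∈ P₀set p d * Zset p d)
    (hHinv : ∀ a ∈ P₀set p d * Zset p d, a⁻¹ ∈ P₀set p d * Zset p d)
    (ρW : GL' p d → (↥(VqSub p d kk Vc q) →ₗ[kk] ↥(VqSub p d kk Vc q)))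
    (hρW : ∀ b ∈ P₀set p d * Zset p d, ∀ w : ↥(VqSub p d kk Vc q),
      ((ρW b w : ↥(VqSub p d kk Vc q)) : Cc p d kk Vc q)
        = ρC b ((w : ↥(VqSub p d kk Vc q)) : Cc p d kk Vc q))
    (hρWmul : ∀ a ∈ P₀set p d * Zset p d, ∀ b ∈ P₀set p d * Zset p d,
      ρW (a * b) = (ρW a).comp (ρW b))
    -- Z acts trivially on V_q
    (hZtriv : ∀ z ∈ Zset p d, ∀ w ∈ VqSub p d kk Vc q, ρC z w = w)
    -- the natural P-equivariant map ind_{P_0Z}^P(V_q) → ⊕_{η ∈ BT_q} V_η,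
    -- characterized on the delta functions spanning the induced representation
    (Φ : ↥(IndSub (↥(VqSub p d kk Vc q)) (P₀set p d * Zset p d) (Pset p d) ρW)
      →ₗ[kk] Cc p d kk Vc q)
    (hΦ : ∀ g, ∀ hg : g ∈ Pset p d, ∀ w : ↥(VqSub p d kk Vc q),
      Φ ⟨indDelta (↥(VqSub p d kk Vc q)) (P₀set p d * Zset p d) ρW g w,
          indDelta_mem (↥(VqSub p d kk Vc q)) (P₀set p d * Zset p d) (Pset p d) ρW
            hHP hPmul hHmul hHinv hρWmul g hg w⟩
        = ρC g ((w : ↥(VqSub p d kk Vc q)) : Cc p d kk Vc q)) :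
    Function.Bijective Φ := by
  have hsimp := fun (b : GL' p d) (η : BTq p d q) => aux_simp p d b q η.1 η.2
  have hone := aux_one_mem p d
  have hρC2 : ∀ b, ∀ hb : b ∈ Pset p d, ∀ (η : BTq p d q)
      (hbη : IsSimpCard p d q (Finset.image (vAct p d b) η.1)) (v : ↥(Vc η.1)),
      ρC b (auxLof p d kk Vc q η v)
        = auxLof p d kk Vc q (⟨Finset.image (vAct p d b) η.1, hbη⟩ : BTq p d q)
            ⟨ρ b v.1, hVcmap b hb η.1 v.1 v.2⟩ := hρC
  -- the identity acts trivially
  have hact1 : ∀ x, act 1 x = x := by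
    intro x
    apply Subtype.ext
    rw [hact 1 hone]
    simp
  have hρ1 : ∀ v, ρ 1 v = v := by
    intro v
    apply Subtype.ext
    apply LocallyConstant.ext
    intro x
    rw [hρval 1 hone, inv_one, hact1]
  have hρC1 : ∀ x, ρC 1 x = x := by
    intro x
    have := auxLof_induction p d kk Vc q (LinearMap.eqLocus (ρC 1) LinearMap.id)
      (fun η v => by
        rw [LinearMap.mem_eqLocus, LinearMap.id_apply, hρC2 1 hone η (hsimp 1 η) v]
        exact aux_lof_congr p d kk Vc q _ _ (Subtype.ext (aux_image_one p d η.1)) _ _ (hρ1 v.1)) x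
    exact this
  have hρCinv : ∀ g ∈ Pset p d, ∀ x, ρC g (ρC g⁻¹ x) = x := by
    intro g hg x
    rw [← LinearMap.comp_apply, ← hρCmul g hg _ (hPinv g hg), mul_inv_cancel, hρC1]
  have hρCinv' : ∀ g ∈ Pset p d, ∀ x, ρC g⁻¹ (ρC g x) = x := by
    intro g hg x
    rw [← LinearMap.comp_apply, ← hρCmul _ (hPinv g hg) g hg, inv_mul_cancel, hρC1]
  have hlofmem : ∀ (η : BTq p d q) (v : ↥(Vc η.1)), auxS p d q η →
      auxLof p d kk Vc q η v ∈ VqSub p d kk Vc q := by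
    intro η v hη
    unfold VqSub
    exact Submodule.mem_iSup_of_mem η (Submodule.mem_iSup_of_mem hη ⟨v, rfl⟩)
  have hVq : ∀ M : Submodule kk (Cc p d kk Vc q),
      (∀ (η : BTq p d q) (v : ↥(Vc η.1)), auxS p d q η →
        auxLof p d kk Vc q η v ∈ M) →
      VqSub p d kk Vc q ≤ M := by
    intro M hM
    unfold VqSub
    refine iSup_le fun η => iSup_le fun hη => ?_
    rintro _ ⟨v, rfl⟩
    exact hM η v hη
  -- projections
  have hproj1 : ∀ g ∈ Pset p d, ∀ w ∈ VqSub p d kk Vc q,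
      auxProj p d kk Vc q (auxGS p d q g) (ρC g w) = ρC g w := by
    intro g hg w hw
    have := hVq (LinearMap.eqLocus ((auxProj p d kk Vc q (auxGS p d q g)).comp (ρC g)) (ρC g))
      (fun η v hη => by
        rw [LinearMap.mem_eqLocus, LinearMap.comp_apply, hρC2 g hg η (hsimp g η) v]
        exact auxProj_pos p d kk Vc q _ _ ⟨η, hη, rfl⟩ _) hw
    exact this
  have hproj2 : ∀ g ∈ Pset p d, ∀ g' ∈ Pset p d, g'⁻¹ * g ∉ P₀set p d * Zset p d →
      ∀ w ∈ VqSub p d kk Vc q,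
      auxProj p d kk Vc q (auxGS p d q g) (ρC g' w) = 0 := by
    intro g hg g' hg' hgg w hw
    have := hVq (LinearMap.ker ((auxProj p d kk Vc q (auxGS p d q g)).comp (ρC g')))
      (fun η v hη => by
        rw [LinearMap.mem_ker, LinearMap.comp_apply, hρC2 g' hg' η (hsimp g' η) v]
        refine auxProj_neg p d kk Vc q _ _ (fun hcon => hgg ?_) _
        exact aux_disj p d hPinv hPmul hHP hHmul hHinv q g' g hg' hg _ ⟨η, hη, rfl⟩ hcon) hw
    exact this
  -- the main formula
  have hmain : ∀ (F : Finset (GL' p d)), ↑F ⊆ Pset p d →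
      ∀ f : ↥(IndSub (↥(VqSub p d kk Vc q)) (P₀set p d * Zset p d) (Pset p d) ρW),
      (∀ x : GL' p d, f.1 x ≠ 0 → ∃ g ∈ F, ∃ h ∈ P₀set p d * Zset p d, x = g * h) →
      ∀ g ∈ Pset p d, auxProj p d kk Vc q (auxGS p d q g) (Φ f) = ρC g (f.1 g).1 := by
    intro F
    induction F using Finset.induction_on with
    | empty =>
      intro _ f hf g hg
      have hf0 : ∀ x, f.1 x = 0 := by
        intro x
        by_contra hx
        obtain ⟨g, hg, _⟩ := hf x hx
        simp at hg
      have : f = 0 := Subtype.ext (funext hf0)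
      rw [this, map_zero, map_zero]
      exact (map_zero (ρC g)).symm
    | insert g₀ F hg₀F ih =>
      intro hF f hf g hg
      have hg₀ : g₀ ∈ Pset p d := hF (by simp)
      have hF' : ↑F ⊆ Pset p d := fun x hx => hF (by simp [Finset.mem_coe.mp hx])
      let δ : ↥(IndSub (↥(VqSub p d kk Vc q)) (P₀set p d * Zset p d) (Pset p d) ρW) :=
        ⟨indDelta (↥(VqSub p d kk Vc q)) (P₀set p d * Zset p d) ρW g₀ (f.1 g₀),
          indDelta_mem (↥(VqSub p d kk Vc q)) (P₀set p d * Zset p d) (Pset p d) ρW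
            hHP hPmul hHmul hHinv hρWmul g₀ hg₀ (f.1 g₀)⟩
      have hδval : ∀ h ∈ P₀set p d * Zset p d, δ.1 (g₀ * h) = f.1 (g₀ * h) := by
        intro h hh
        show indDelta (↥(VqSub p d kk Vc q)) (P₀set p d * Zset p d) ρW g₀ (f.1 g₀) (g₀ * h) = _
        rw [indDelta, if_pos (by rw [inv_mul_cancel_left]; exact hh), f.2.1 g₀ h hh]
        congr 2
        group
      have hδ0 : ∀ x, g₀⁻¹ * x ∉ P₀set p d * Zset p d → δ.1 x = 0 := by
        intro x hx
        exact if_neg hx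
      have h1 := ih hF' (f - δ) (by
        intro x hx
        have hx' : f.1 x - δ.1 x ≠ 0 := hx
        by_cases hxH : g₀⁻¹ * x ∈ P₀set p d * Zset p d
        · exfalso
          have e := hδval _ hxH
          rw [mul_inv_cancel_left] at e
          exact hx' (by rw [e, sub_self])
        · rw [hδ0 x hxH, sub_zero] at hx'
          obtain ⟨g1, hg1, h, hh, rfl⟩ := hf x hx'
          rcases Finset.mem_insert.mp hg1 with rfl | hg1
          · exact absurd (by rw [inv_mul_cancel_left]; exact hh) hxH
          · exact ⟨g1, hg1, h, hh, rfl⟩) g hg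
      have h2 : auxProj p d kk Vc q (auxGS p d q g) (Φ δ) = ρC g (δ.1 g).1 := by
        have hΦδ : Φ δ = ρC g₀ (f.1 g₀).1 := hΦ g₀ hg₀ (f.1 g₀)
        rw [hΦδ]
        by_cases hgH : g₀⁻¹ * g ∈ P₀set p d * Zset p d
        · have hgH' : g⁻¹ * g₀ ∈ P₀set p d * Zset p d := by
            have := hHinv _ hgH
            rwa [mul_inv_rev, inv_inv] at this
          have e1 : δ.1 g = ρW (g⁻¹ * g₀) (f.1 g₀) := if_pos hgH
          have e2 : ρC g (δ.1 g).1 = ρC g₀ (f.1 g₀).1 := by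
            rw [e1, hρW _ hgH', ← LinearMap.comp_apply, ← hρCmul g hg _ (hHP hgH'),
              mul_inv_cancel_left]
          rw [← e2]
          exact hproj1 g hg _ (δ.1 g).2
        · rw [hδ0 g hgH, hproj2 g hg g₀ hg₀ hgH _ (f.1 g₀).2]
          exact (map_zero (ρC g)).symm
      have h3 : (f - δ).1 g = f.1 g - δ.1 g := rfl
      rw [map_sub, map_sub, h2, h3] at h1
      have h4 : ((f.1 g - δ.1 g : ↥(VqSub p d kk Vc q)) : Cc p d kk Vc q)
        = (f.1 g).1 - (δ.1 g).1 := rfl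
      rw [h4, map_sub] at h1
      exact sub_left_injective h1
  constructor
  · rw [← LinearMap.ker_eq_bot, LinearMap.ker_eq_bot']
    intro f hf
    obtain ⟨F, hF, hF'⟩ := f.2.2.2
    apply Subtype.ext
    funext x
    by_cases hx : x ∈ Pset p d
    · have h1 := hmain F hF f hF' x hx
      rw [hf, map_zero] at h1
      have h2 := hρCinv' x hx (f.1 x).1
      rw [← h1, map_zero] at h2
      exact Subtype.ext h2.symm
    · exact f.2.2.1 x hx
  · rw [← LinearMap.range_eq_top]
    rw [eq_top_iff]
    rintro x -
    have hgen : ∀ (η : BTq p d q) (v : ↥(Vc η.1)),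
        auxLof p d kk Vc q η v ∈ LinearMap.range Φ := by
      intro η v
      by_cases hη : ∃ b ∈ Pset p d, ∃ J : Finset (Fin d),
          η.1 = Finset.image (vAct p d b) (etaJ p d J)
      · obtain ⟨b, hb, J, hJ⟩ := hη
        have hcard : J.card = q := by
          have h1 := η.2.1
          rw [hJ, Finset.card_image_of_injective _ (aux_vAct_inj p d b),
            aux_eta_card p d hPinv hPmul] at h1
          omega
        have hw : ρC b⁻¹ (auxLof p d kk Vc q η v)
            ∈ VqSub p d kk Vc q := by
          rw [hρC2 b⁻¹ (hPinv b hb) η (hsimp b⁻¹ η) v]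
          refine hlofmem _ _ ⟨1, aux_one_P0 p d, J, hcard, ?_⟩
          show Finset.image (vAct p d b⁻¹) η.1 = _
          rw [hJ, ← aux_image_mul, inv_mul_cancel]
        have h2 := hΦ b hb ⟨_, hw⟩
        rw [hρCinv b hb] at h2
        exact ⟨_, h2⟩
      · have h0 : v = 0 := by
          have hv : v.1 ∈ (⊥ : Submodule kk ↥(VStSub p d kk)) := hVc0 η.1 hη ▸ v.2
          exact Subtype.ext ((Submodule.mem_bot kk).mp hv)
        rw [h0, map_zero]
        exact Submodule.zero_mem _
    exact auxLof_induction p d kk Vc q _ hgen x
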